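/- The Frenkel–Turaev summation formula (case N=1): for |p|<1, |q|<1 and parameters t_0,…,t_5 ∈ ℂ* with ∏_{m=0}^5 t_m = q and t_4 t_5 = q^{-1}, one has 1 + [θ(t_5² q²;p)/θ(t_5²;p)] · ∏_{m=0}^5 [θ(t_m t_5;p)/θ(q t_5/t_m;p)] · q = θ(q t_5²;p)θ(q/(t_1t_2);p)θ(q/(t_1t_3);p)θ(q/(t_2t_3);p) / (θ(q/(t_1t_2t_3t_5);p)θ(q t_5/t_1;p)θ(q t_5/t_2;p)θ(q t_5/t_3;p)), assuming all denominators are nonzero. -/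

import Mathlib

noncomputable def qPochhammerInf (z q : ℂ) : ℂ := ∏' j : ℕ, (1 - z * q ^ j)

noncomputable def theta (z p : ℂ) : ℂ :=
  ∏' j : ℕ, (1 - z * p ^ j) * (1 - p ^ (j + 1) * z⁻¹)

noncomputable def ellGamma (z p q : ℂ) : ℂ :=
  ∏' jk : ℕ × ℕ,
    (1 - z⁻¹ * p ^ (jk.1 + 1) * q ^ (jk.2 + 1)) / (1 - z * p ^ jk.1 * q ^ jk.2)

/-!
By the Jacobi triple product, the limit of a finite identity with Gaussian binomial coefficients,
`θ(z; p)` is a constant multiple of `∑ p ^ (k (k - 1) / 2) (-z) ^ k`. In a product of two such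
series, splitting the index pairs `(n, m)` according to the parity of `n + m` writes
`θ(u; p) θ(v; p)` as a bilinear expression in functions of `u v` and of `u / v`. Weierstrass'
three-term addition formula follows by applying this to each pair of factors: only two products and
two quotients of the arguments occur.

For `N = 1` the factors of the Frenkel–Turaev sum that involve `t₄` and `t₅` alone cancel to `-1`,
and what remains is Weierstrass' formula with arguments `q t₅ / t₀, …, q t₅ / t₃`.
-/

open Filter Topology

section ThetaTerm

variable {K : Type*} [Field K] {p z u v : K}

/-- The general term `p ^ (k (k - 1) / 2) z ^ k` of the bilateral theta series; the integer division
in the exponent is exact. -/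
def thetaTerm (p z : K) (k : ℤ) : K := p ^ (k * (k - 1) / 2) * z ^ k

lemma two_mul_mul_pred_div_two (k : ℤ) : 2 * (k * (k - 1) / 2) = k * (k - 1) :=
  Int.mul_ediv_cancel' (Int.even_mul_pred_self k).two_dvd

lemma thetaTerm_ne_zero (hp0 : p ≠ 0) (hz : z ≠ 0) (k : ℤ) : thetaTerm p z k ≠ 0 :=
  mul_ne_zero (zpow_ne_zero _ hp0) (zpow_ne_zero _ hz)

lemma thetaTerm_add_one (hp0 : p ≠ 0) (hz : z ≠ 0) (k : ℤ) :
    thetaTerm p z (k + 1) = thetaTerm p z k * (p ^ k * z) := by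
  have hexp : (k + 1) * (k + 1 - 1) / 2 = k * (k - 1) / 2 + k := by
    linarith [two_mul_mul_pred_div_two k, two_mul_mul_pred_div_two (k + 1)]
  rw [thetaTerm, thetaTerm, hexp, zpow_add₀ hp0, zpow_add_one₀ hz]
  ring

lemma thetaTerm_one_sub (hz : z ≠ 0) (k : ℤ) :
    thetaTerm p z (1 - k) = z * thetaTerm p z⁻¹ k := by
  rw [thetaTerm, thetaTerm, show (1 - k) * (1 - k - 1) = k * (k - 1) by ring, zpow_sub₀ hz,
    inv_zpow, zpow_one]
  ring

lemma thetaTerm_sq (p z : K) (k : ℤ) : thetaTerm (p ^ 2) z k = p ^ (k * (k - 1)) * z ^ k := by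
  rw [thetaTerm, ← zpow_natCast p 2, ← zpow_mul, Nat.cast_ofNat, two_mul_mul_pred_div_two]

lemma thetaTerm_sq_mul_neg (hp0 : p ≠ 0) (z : K) (k : ℤ) :
    thetaTerm (p ^ 2) (p * z) (-k) = thetaTerm (p ^ 2) (p * z⁻¹) k := by
  simp only [thetaTerm_sq, mul_zpow, inv_zpow', ← mul_assoc, ← zpow_add₀ hp0]
  ring_nf

lemma thetaTerm_add_mul_thetaTerm_sub (hp0 : p ≠ 0) (hu : u ≠ 0) (hv : v ≠ 0) (a b : ℤ) :
    thetaTerm p u (a + b) * thetaTerm p v (a - b) =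
      thetaTerm (p ^ 2) (u * v) a * thetaTerm (p ^ 2) (p * (u / v)) b := by
  have hexp : (a + b) * (a + b - 1) / 2 + (a - b) * (a - b - 1) / 2 =
      a * (a - 1) + b * (b - 1) + b := by
    linarith [two_mul_mul_pred_div_two (a + b), two_mul_mul_pred_div_two (a - b)]
  simp only [thetaTerm_sq, mul_zpow, div_zpow]
  rw [thetaTerm, thetaTerm, mul_mul_mul_comm, ← zpow_add₀ hp0, hexp, zpow_add₀ hp0,
    zpow_add₀ hp0, zpow_add₀ hu, zpow_sub₀ hv]
  ring

lemma thetaTerm_add_mul_thetaTerm_sub_add_one (hp0 : p ≠ 0) (hu : u ≠ 0) (hv : v ≠ 0) (a b : ℤ) :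
    thetaTerm p u (a + b) * thetaTerm p v (a - b + 1) =
      v * (thetaTerm (p ^ 2) (p * (u * v)) a * thetaTerm (p ^ 2) (u / v) b) := by
  have hpb : p ^ b ≠ 0 := zpow_ne_zero b hp0
  rw [thetaTerm_add_one hp0 hv, ← mul_assoc, thetaTerm_add_mul_thetaTerm_sub hp0 hu hv]
  simp only [thetaTerm, mul_zpow, zpow_sub₀ hp0]
  field_simp

end ThetaTerm

section ThetaSeries

variable {𝕜 : Type*} [NormedField 𝕜] {p z u v w : 𝕜}

/-- The bilateral theta series `∑ p ^ (k (k - 1) / 2) z ^ k` over `k : ℤ`. It has no alternating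
sign, so that it is the expansion of the theta function at `-z`. -/
noncomputable def thetaSeries (p z : 𝕜) : 𝕜 := ∑' k : ℤ, thetaTerm p z k

lemma thetaSeries_inv (hz : z ≠ 0) : thetaSeries p z⁻¹ = thetaSeries p z / z := by
  rw [eq_div_iff hz, mul_comm, thetaSeries, thetaSeries, ← tsum_mul_left,
    ← (Equiv.subLeft (1 : ℤ)).tsum_eq (thetaTerm p z)]
  simp only [Equiv.subLeft_apply, thetaTerm_one_sub hz]

lemma thetaSeries_sq_mul_inv (hp0 : p ≠ 0) (z : 𝕜) :
    thetaSeries (p ^ 2) (p * z⁻¹) = thetaSeries (p ^ 2) (p * z) := by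
  rw [thetaSeries, thetaSeries, ← (Equiv.neg ℤ).tsum_eq (thetaTerm (p ^ 2) (p * z))]
  simp only [Equiv.neg_apply, thetaTerm_sq_mul_neg hp0]

lemma summable_norm_thetaTerm_natCast (hp : ‖p‖ < 1) (hp0 : p ≠ 0) (hz : z ≠ 0) :
    Summable fun n : ℕ ↦ ‖thetaTerm p z n‖ := by
  refine summable_of_ratio_test_tendsto_lt_one zero_lt_one
    (.of_forall fun n ↦ norm_ne_zero_iff.mpr (thetaTerm_ne_zero hp0 hz n)) ?_
  have hratio : Tendsto (fun n : ℕ ↦ ‖p‖ ^ n * ‖z‖) atTop (𝓝 0) := by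
    simpa using (tendsto_pow_atTop_nhds_zero_of_lt_one (norm_nonneg p) hp).mul_const ‖z‖
  refine hratio.congr fun n ↦ ?_
  rw [norm_norm, norm_norm, Nat.cast_succ, thetaTerm_add_one hp0 hz, norm_mul,
    mul_div_cancel_left₀ _ (norm_ne_zero_iff.mpr (thetaTerm_ne_zero hp0 hz n)), norm_mul,
    zpow_natCast, norm_pow]

lemma summable_norm_thetaTerm (hp : ‖p‖ < 1) (hp0 : p ≠ 0) (hz : z ≠ 0) :
    Summable fun k : ℤ ↦ ‖thetaTerm p z k‖ := by
  refine Summable.of_nat_of_neg (summable_norm_thetaTerm_natCast hp hp0 hz) ?_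
  refine (((summable_nat_add_iff 1).mpr
    (summable_norm_thetaTerm_natCast hp hp0 (inv_ne_zero hz))).mul_left ‖z‖).congr fun n ↦ ?_
  rw [← norm_mul, ← thetaTerm_one_sub hz]
  push_cast
  ring_nf

/-- Parametrization of the pairs of integers with even sum. -/
def evenSumPair (x : ℤ × ℤ) : ℤ × ℤ := (x.1 + x.2, x.1 - x.2)

/-- Parametrization of the pairs of integers with odd sum. -/
def oddSumPair (x : ℤ × ℤ) : ℤ × ℤ := (x.1 + x.2, x.1 - x.2 + 1)

lemma evenSumPair_injective : Function.Injective evenSumPair := by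
  rintro ⟨a, b⟩ ⟨c, d⟩ h
  simp only [evenSumPair, Prod.mk.injEq] at h ⊢
  omega

lemma oddSumPair_injective : Function.Injective oddSumPair := by
  rintro ⟨a, b⟩ ⟨c, d⟩ h
  simp only [oddSumPair, Prod.mk.injEq] at h ⊢
  omega

lemma isCompl_range_evenSumPair_range_oddSumPair :
    IsCompl (Set.range evenSumPair) (Set.range oddSumPair) := by
  refine ⟨Set.disjoint_iff.mpr ?_, codisjoint_iff.mpr (Set.eq_univ_of_forall ?_)⟩
  · rintro _ ⟨⟨⟨a, b⟩, rfl⟩, ⟨⟨c, d⟩, h⟩⟩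
    simp only [evenSumPair, oddSumPair, Prod.mk.injEq] at h
    omega
  · rintro ⟨n, m⟩
    rcases Int.even_or_odd' (n + m) with ⟨a, h | h⟩
    · exact Or.inl ⟨(a, n - a), Prod.ext (by simp [evenSumPair]) (by simp [evenSumPair]; omega)⟩
    · exact Or.inr ⟨(a, n - a), Prod.ext (by simp [oddSumPair]) (by simp [oddSumPair]; omega)⟩

variable [CompleteSpace 𝕜]

lemma hasSum_thetaTerm (hp : ‖p‖ < 1) (hp0 : p ≠ 0) (hz : z ≠ 0) :
    HasSum (thetaTerm p z) (thetaSeries p z) :=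
  (summable_norm_thetaTerm hp hp0 hz).of_norm.hasSum

lemma hasSum_thetaTerm_mul_thetaTerm (hp : ‖p‖ < 1) (hp0 : p ≠ 0) (hz : z ≠ 0) (hw : w ≠ 0) :
    HasSum (fun x : ℤ × ℤ ↦ thetaTerm p z x.1 * thetaTerm p w x.2)
      (thetaSeries p z * thetaSeries p w) :=
  (hasSum_thetaTerm hp hp0 hz).mul (hasSum_thetaTerm hp hp0 hw)
    (summable_mul_of_summable_norm (summable_norm_thetaTerm hp hp0 hz)
      (summable_norm_thetaTerm hp hp0 hw))

lemma thetaSeries_mul_thetaSeries (hp : ‖p‖ < 1) (hp0 : p ≠ 0) (hu : u ≠ 0) (hv : v ≠ 0) :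
    thetaSeries p u * thetaSeries p v =
      thetaSeries (p ^ 2) (u * v) * thetaSeries (p ^ 2) (p * (u / v)) +
        v * (thetaSeries (p ^ 2) (p * (u * v)) * thetaSeries (p ^ 2) (u / v)) := by
  have hp2 : ‖p ^ 2‖ < 1 := norm_pow p 2 ▸ pow_lt_one₀ (norm_nonneg p) hp two_ne_zero
  have hp20 : p ^ 2 ≠ 0 := pow_ne_zero 2 hp0
  have huv : u * v ≠ 0 := mul_ne_zero hu hv
  have hdiv : u / v ≠ 0 := div_ne_zero hu hv
  let f (x : ℤ × ℤ) : 𝕜 := thetaTerm p u x.1 * thetaTerm p v x.2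
  have heven : HasSum (f ∘ evenSumPair)
      (thetaSeries (p ^ 2) (u * v) * thetaSeries (p ^ 2) (p * (u / v))) := by
    simp only [f, Function.comp_def, evenSumPair, thetaTerm_add_mul_thetaTerm_sub hp0 hu hv]
    exact hasSum_thetaTerm_mul_thetaTerm hp2 hp20 huv (mul_ne_zero hp0 hdiv)
  have hodd : HasSum (f ∘ oddSumPair)
      (v * (thetaSeries (p ^ 2) (p * (u * v)) * thetaSeries (p ^ 2) (u / v))) := by
    simp only [f, Function.comp_def, oddSumPair, thetaTerm_add_mul_thetaTerm_sub_add_one hp0 hu hv]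
    exact (hasSum_thetaTerm_mul_thetaTerm hp2 hp20 (mul_ne_zero hp0 huv) hdiv).mul_left v
  have hsum := HasSum.add_isCompl isCompl_range_evenSumPair_range_oddSumPair
    (evenSumPair_injective.hasSum_range_iff.mpr heven)
    (oddSumPair_injective.hasSum_range_iff.mpr hodd)
  exact (hasSum_thetaTerm_mul_thetaTerm hp hp0 hu hv).unique hsum

/-- With `s` as a parameter, no square root of `x * y * z * w` has to be chosen. -/
lemma thetaSeries_weierstrass {s x y z w : 𝕜} (hp : ‖p‖ < 1) (hp0 : p ≠ 0) (hx : x ≠ 0)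
    (hy : y ≠ 0) (hz : z ≠ 0) (hw : w ≠ 0) (hs : s ^ 2 = x * y * z * w) :
    thetaSeries p x * thetaSeries p y * (thetaSeries p z * thetaSeries p w) -
        thetaSeries p (-s / x) * thetaSeries p (-s / y) *
          (thetaSeries p (-s / z) * thetaSeries p (-s / w)) =
      x * (thetaSeries p s * thetaSeries p (z * w / s) *
        (thetaSeries p (y * z / s) * thetaSeries p (y * w / s))) := by
  have hs0 : s ≠ 0 := by
    rintro rfl
    simp [hx, hy, hz, hw] at hs
  have hneg : -s ≠ 0 := neg_ne_zero.mpr hs0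
  have hmul {u v : 𝕜} (hu : u ≠ 0) (hv : v ≠ 0) := thetaSeries_mul_thetaSeries hp hp0 hu hv
  have hxy := thetaSeries_inv (p := p ^ 2) (div_ne_zero hx hy)
  have hzw := thetaSeries_inv (p := p ^ 2) (div_ne_zero hz hw)
  have hxy' := thetaSeries_sq_mul_inv hp0 (x / y)
  have hzw' := thetaSeries_sq_mul_inv hp0 (z / w)
  rw [hmul hx hy, hmul hz hw, hmul (div_ne_zero hneg hx) (div_ne_zero hneg hy),
    hmul (div_ne_zero hneg hz) (div_ne_zero hneg hw), hmul hs0 (by simp [*]),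
    hmul (by simp [*]) (by simp [*]),
    show -s / x * (-s / y) = z * w by field_simp; linear_combination hs,
    show -s / x / (-s / y) = (x / y)⁻¹ by field_simp,
    show -s / z * (-s / w) = x * y by field_simp; linear_combination hs,
    show -s / z / (-s / w) = (z / w)⁻¹ by field_simp,
    show s * (z * w / s) = z * w by field_simp,
    show s / (z * w / s) = x * y by field_simp; linear_combination hs,
    show y * z / s * (y * w / s) = (x / y)⁻¹ by field_simp; linear_combination -hs,
    show y * z / s / (y * w / s) = z / w by field_simp,
    hxy, hzw, hxy', hzw']
  generalize thetaSeries (p ^ 2) (x * y) = F₁, thetaSeries (p ^ 2) (p * (x * y)) = G₁,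
    thetaSeries (p ^ 2) (z * w) = F₂, thetaSeries (p ^ 2) (p * (z * w)) = G₂,
    thetaSeries (p ^ 2) (x / y) = F₃, thetaSeries (p ^ 2) (p * (x / y)) = G₃,
    thetaSeries (p ^ 2) (z / w) = F₄, thetaSeries (p ^ 2) (p * (z / w)) = G₄
  obtain rfl : w = s ^ 2 / (x * y * z) := by
    field_simp
    linear_combination -hs
  field_simp
  ring

end ThetaSeries

section FiniteTripleProduct

variable {K : Type*} [Field K] {p z : K}

/-- The finite `q`-Pochhammer symbol `(p; p)_n = (1 - p) (1 - p ^ 2) ⋯ (1 - p ^ n)`. -/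
def qPochhammerSelf (p : K) (n : ℕ) : K := ∏ i ∈ Finset.range n, (1 - p ^ (i + 1))

/-- The reciprocal `1 / (p; p)_k`, extended by zero to negative integers `k`. -/
def qPochhammerSelfInv (p : K) (k : ℤ) : K :=
  if 0 ≤ k then (qPochhammerSelf p k.toNat)⁻¹ else 0

/-- The Gaussian binomial coefficient `2N` over `N + k` in base `p`, zero for `|k| > N`; it is the
coefficient of `thetaTerm p (-z) k` in the finite triple product. -/
def centralGaussBinom (p : K) (N : ℕ) (k : ℤ) : K :=
  qPochhammerSelf p (2 * N) * qPochhammerSelfInv p (N - k) * qPochhammerSelfInv p (N + k)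

lemma qPochhammerSelf_succ (p : K) (n : ℕ) :
    qPochhammerSelf p (n + 1) = qPochhammerSelf p n * (1 - p ^ (n + 1)) :=
  Finset.prod_range_succ _ _

lemma qPochhammerSelfInv_natCast (p : K) (n : ℕ) :
    qPochhammerSelfInv p n = (qPochhammerSelf p n)⁻¹ := by
  rw [qPochhammerSelfInv, if_pos (Int.natCast_nonneg n), Int.toNat_natCast]

lemma qPochhammerSelfInv_sub_one (hp : ∀ n : ℕ, 1 - p ^ (n + 1) ≠ 0) (k : ℤ) :
    qPochhammerSelfInv p (k - 1) = (1 - p ^ k) * qPochhammerSelfInv p k := by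
  rcases lt_trichotomy k 0 with hk | rfl | hk
  · simp [qPochhammerSelfInv, not_le.mpr hk, show ¬ (1 ≤ k) by omega]
  · simp [qPochhammerSelfInv]
  · obtain ⟨n, rfl⟩ := Int.eq_succ_of_zero_lt hk
    rw [add_sub_cancel_right, ← Nat.cast_succ, zpow_natCast, qPochhammerSelfInv_natCast,
      qPochhammerSelfInv_natCast, qPochhammerSelf_succ, mul_inv, mul_left_comm,
      mul_inv_cancel₀ (hp n), mul_one]

lemma centralGaussBinom_zero (p : K) (k : ℤ) :
    centralGaussBinom p 0 k = if k = 0 then 1 else 0 := by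
  rcases lt_trichotomy k 0 with hk | rfl | hk
  · simp [centralGaussBinom, qPochhammerSelfInv, not_le.mpr hk, hk.ne]
  · simp [centralGaussBinom, qPochhammerSelfInv, qPochhammerSelf]
  · simp [centralGaussBinom, qPochhammerSelfInv, not_le.mpr hk, hk.ne']

lemma centralGaussBinom_succ (hp : ∀ n : ℕ, 1 - p ^ (n + 1) ≠ 0) (hp0 : p ≠ 0) (N : ℕ) (k : ℤ) :
    centralGaussBinom p (N + 1) k = (1 + p ^ (2 * N + 1)) * centralGaussBinom p N k +
      p ^ (N + 1 - k) * centralGaussBinom p N (k - 1) +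
      p ^ (N + 1 + k) * centralGaussBinom p N (k + 1) := by
  have hk : p ^ k ≠ 0 := zpow_ne_zero k hp0
  have hleft := qPochhammerSelfInv_sub_one hp (N + 1 - k)
  have hleft' := qPochhammerSelfInv_sub_one hp (N - k)
  have hright := qPochhammerSelfInv_sub_one hp (N + 1 + k)
  have hright' := qPochhammerSelfInv_sub_one hp (N + k)
  rw [show (N : ℤ) + 1 - k - 1 = N - k by ring] at hleft
  rw [show (N : ℤ) + 1 + k - 1 = N + k by ring] at hright
  simp only [centralGaussBinom, Nat.cast_succ, show 2 * (N + 1) = 2 * N + 1 + 1 by ring,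
    qPochhammerSelf_succ, show (N : ℤ) - (k - 1) = N + 1 - k by ring,
    show (N : ℤ) + (k - 1) = N + k - 1 by ring, show (N : ℤ) - (k + 1) = N - k - 1 by ring,
    show (N : ℤ) + (k + 1) = N + 1 + k by ring, hleft', hright', hleft, hright]
  simp only [zpow_sub₀ hp0, zpow_add₀ hp0, zpow_natCast, zpow_one]
  field_simp
  ring

lemma finite_jacobi_triple_product [TopologicalSpace K] [IsTopologicalRing K]
    (hp : ∀ n : ℕ, 1 - p ^ (n + 1) ≠ 0) (hp0 : p ≠ 0) (hz : z ≠ 0) (N : ℕ) :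
    HasSum (fun k : ℤ ↦ centralGaussBinom p N k * thetaTerm p (-z) k)
      (∏ j ∈ Finset.range N, (1 - z * p ^ j) * (1 - p ^ (j + 1) * z⁻¹)) := by
  have hz' : -z ≠ 0 := neg_ne_zero.mpr hz
  induction N with
  | zero =>
    rw [Finset.prod_range_zero]
    refine (hasSum_ite_eq (0 : ℤ) (1 : K)).congr_fun fun k ↦ ?_
    by_cases hk : k = 0 <;> simp [centralGaussBinom_zero, hk, thetaTerm]
  | succ N ih =>
    set P := ∏ j ∈ Finset.range N, (1 - z * p ^ j) * (1 - p ^ (j + 1) * z⁻¹)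
    have hdown := (Equiv.subRight (1 : ℤ)).hasSum_iff.mpr ih
    have hup := (Equiv.addRight (1 : ℤ)).hasSum_iff.mpr ih
    have hexpand : P * ((1 - z * p ^ N) * (1 - p ^ (N + 1) * z⁻¹)) =
        (1 + p ^ (2 * N + 1)) * P - z * p ^ N * P - p ^ (N + 1) * z⁻¹ * P := by
      field_simp
      ring
    rw [Finset.prod_range_succ, hexpand]
    refine (((ih.mul_left _).sub (hdown.mul_left _)).sub (hup.mul_left _)).congr_fun fun k ↦ ?_
    have hk : p ^ k ≠ 0 := zpow_ne_zero k hp0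
    have hterm := thetaTerm_add_one hp0 hz' (k - 1)
    rw [sub_add_cancel, zpow_sub_one₀ hp0] at hterm
    simp only [Function.comp_apply, Equiv.subRight_apply, Equiv.coe_addRight,
      centralGaussBinom_succ hp hp0, thetaTerm_add_one hp0 hz' k, hterm, zpow_sub₀ hp0,
      zpow_add₀ hp0, zpow_natCast, zpow_one]
    field_simp
    ring

end FiniteTripleProduct

section OneSubMulPow

variable {𝕜 : Type*} [NormedField 𝕜] {p : 𝕜}

lemma one_sub_pow_succ_ne_zero (hp : ‖p‖ < 1) (n : ℕ) : 1 - p ^ (n + 1) ≠ 0 := by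
  intro h
  have hnorm : ‖p ^ (n + 1)‖ < 1 :=
    norm_pow p (n + 1) ▸ pow_lt_one₀ (norm_nonneg p) hp n.succ_ne_zero
  rw [← sub_eq_zero.mp h, norm_one] at hnorm
  exact lt_irrefl _ hnorm

lemma summable_norm_neg_mul_pow (hp : ‖p‖ < 1) (z : 𝕜) :
    Summable fun j : ℕ ↦ ‖-(z * p ^ j)‖ := by
  simpa only [norm_neg, norm_mul, norm_pow] using
    (summable_geometric_of_lt_one (norm_nonneg p) hp).mul_left ‖z‖

lemma multipliable_one_sub_mul_pow [CompleteSpace 𝕜] (hp : ‖p‖ < 1) (z : 𝕜) :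
    Multipliable fun j : ℕ ↦ 1 - z * p ^ j := by
  simpa only [sub_eq_add_neg] using
    multipliable_one_add_of_summable (summable_norm_neg_mul_pow hp z)

lemma multipliable_theta_factors [CompleteSpace 𝕜] (hp : ‖p‖ < 1) (z : 𝕜) :
    Multipliable fun j : ℕ ↦ (1 - z * p ^ j) * (1 - p ^ (j + 1) * z⁻¹) := by
  have hfactor (j : ℕ) : 1 - p ^ (j + 1) * z⁻¹ = 1 - p * z⁻¹ * p ^ j := by ring
  simpa only [hfactor] using
    (multipliable_one_sub_mul_pow hp z).mul (multipliable_one_sub_mul_pow hp (p * z⁻¹))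

end OneSubMulPow

section TripleProduct

variable {p z : ℂ}

lemma qPochhammerInf_eq_one_sub_mul (hp : ‖p‖ < 1) (z : ℂ) :
    qPochhammerInf z p = (1 - z) * qPochhammerInf (p * z) p := by
  have hshift (j : ℕ) : 1 - z * p ^ (j + 1) = 1 - p * z * p ^ j := by ring
  rw [qPochhammerInf, tprod_eq_zero_mul', pow_zero, mul_one]
  · simp only [hshift, qPochhammerInf]
  · simpa only [hshift] using multipliable_one_sub_mul_pow hp (p * z)

lemma theta_eq_qPochhammerInf_mul (hp : ‖p‖ < 1) (z : ℂ) :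
    theta z p = qPochhammerInf z p * qPochhammerInf (p * z⁻¹) p := by
  have hfactor (j : ℕ) : 1 - p ^ (j + 1) * z⁻¹ = 1 - p * z⁻¹ * p ^ j := by ring
  simp only [theta, hfactor]
  exact (multipliable_one_sub_mul_pow hp z).tprod_mul (multipliable_one_sub_mul_pow hp _)

lemma theta_inv (hp : ‖p‖ < 1) (hz : z ≠ 0) : theta z⁻¹ p = -theta z p / z := by
  rw [theta_eq_qPochhammerInf_mul hp, theta_eq_qPochhammerInf_mul hp, inv_inv,
    qPochhammerInf_eq_one_sub_mul hp z, qPochhammerInf_eq_one_sub_mul hp z⁻¹]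
  field_simp
  ring

lemma theta_zero_right (z : ℂ) : theta z 0 = 1 - z := by
  rw [theta, tprod_eq_mulSingle 0]
  · simp
  · intro j hj
    simp [hj]

lemma qPochhammerInf_self_ne_zero (hp : ‖p‖ < 1) : qPochhammerInf p p ≠ 0 := by
  simp only [qPochhammerInf, sub_eq_add_neg]
  refine tprod_one_add_ne_zero_of_summable (fun n ↦ ?_) (summable_norm_neg_mul_pow hp p)
  simpa only [← sub_eq_add_neg, ← pow_succ'] using one_sub_pow_succ_ne_zero hp n

lemma tendsto_qPochhammerSelf (hp : ‖p‖ < 1) :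
    Tendsto (qPochhammerSelf p) atTop (𝓝 (qPochhammerInf p p)) := by
  refine (multipliable_one_sub_mul_pow hp p).tendsto_prod_tprod_nat.congr fun n ↦ ?_
  simp only [qPochhammerSelf, pow_succ']

lemma tendsto_qPochhammerSelfInv (hp : ‖p‖ < 1) :
    Tendsto (qPochhammerSelfInv p) atTop (𝓝 (qPochhammerInf p p)⁻¹) := by
  rw [← Nat.map_cast_int_atTop, tendsto_map'_iff]
  refine ((tendsto_qPochhammerSelf hp).inv₀ (qPochhammerInf_self_ne_zero hp)).congr fun n ↦ ?_
  rw [Function.comp_apply, qPochhammerSelfInv_natCast]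

lemma tendsto_centralGaussBinom (hp : ‖p‖ < 1) (k : ℤ) :
    Tendsto (fun N ↦ centralGaussBinom p N k) atTop (𝓝 (qPochhammerInf p p)⁻¹) := by
  have hdown : Tendsto (fun N : ℕ ↦ (N : ℤ) - k) atTop atTop :=
    tendsto_atTop_add_const_right _ (-k) tendsto_natCast_atTop_atTop
  have hup : Tendsto (fun N : ℕ ↦ (N : ℤ) + k) atTop atTop :=
    tendsto_atTop_add_const_right _ k tendsto_natCast_atTop_atTop
  have hdouble : Tendsto (fun N : ℕ ↦ 2 * N) atTop atTop := tendsto_id.const_mul_atTop' two_pos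
  have h := (((tendsto_qPochhammerSelf hp).comp hdouble).mul
    ((tendsto_qPochhammerSelfInv hp).comp hdown)).mul ((tendsto_qPochhammerSelfInv hp).comp hup)
  rwa [mul_inv_cancel₀ (qPochhammerInf_self_ne_zero hp), one_mul] at h

lemma exists_norm_qPochhammerSelfInv_le (hp : ‖p‖ < 1) :
    ∃ C, ∀ k, ‖qPochhammerSelfInv p k‖ ≤ C := by
  obtain ⟨C, hC⟩ := ((tendsto_qPochhammerSelf hp).inv₀
    (qPochhammerInf_self_ne_zero hp)).norm.bddAbove_range
  have hC' (n : ℕ) : ‖(qPochhammerSelf p n)⁻¹‖ ≤ C := hC ⟨n, rfl⟩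
  refine ⟨C, fun k ↦ ?_⟩
  rw [qPochhammerSelfInv]
  split_ifs
  · exact hC' _
  · exact norm_zero.trans_le ((norm_nonneg _).trans (hC' 0))

lemma exists_norm_centralGaussBinom_le (hp : ‖p‖ < 1) :
    ∃ C, ∀ N k, ‖centralGaussBinom p N k‖ ≤ C := by
  obtain ⟨A, hA⟩ := (tendsto_qPochhammerSelf hp).norm.bddAbove_range
  obtain ⟨B, hB⟩ := exists_norm_qPochhammerSelfInv_le hp
  have hA' (n : ℕ) : ‖qPochhammerSelf p n‖ ≤ A := hA ⟨n, rfl⟩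
  refine ⟨A * B * B, fun N k ↦ ?_⟩
  have hA0 : 0 ≤ A := (norm_nonneg _).trans (hA' 0)
  have hB0 : 0 ≤ B := (norm_nonneg _).trans (hB 0)
  rw [centralGaussBinom, norm_mul, norm_mul]
  gcongr
  exacts [hA' _, hB _, hB _]

lemma jacobi_triple_product (hp : ‖p‖ < 1) (hp0 : p ≠ 0) (hz : z ≠ 0) :
    qPochhammerInf p p * theta z p = thetaSeries p (-z) := by
  obtain ⟨C, hC⟩ := exists_norm_centralGaussBinom_le hp
  have hlim : Tendsto (fun N ↦ ∑' k : ℤ, centralGaussBinom p N k * thetaTerm p (-z) k) atTop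
      (𝓝 (∑' k : ℤ, (qPochhammerInf p p)⁻¹ * thetaTerm p (-z) k)) := by
    refine tendsto_tsum_of_dominated_convergence
      ((summable_norm_thetaTerm hp hp0 (neg_ne_zero.mpr hz)).mul_left C)
      (fun k ↦ (tendsto_centralGaussBinom hp k).mul_const _) (.of_forall fun N k ↦ ?_)
    rw [norm_mul]
    gcongr
    exact hC N k
  simp only [(finite_jacobi_triple_product (one_sub_pow_succ_ne_zero hp) hp0 hz
    _).tsum_eq, tsum_mul_left] at hlim
  have htheta : theta z p = (qPochhammerInf p p)⁻¹ * thetaSeries p (-z) :=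
    tendsto_nhds_unique (multipliable_theta_factors hp z).tendsto_prod_tprod_nat hlim
  rw [htheta, mul_inv_cancel_left₀ (qPochhammerInf_self_ne_zero hp)]

end TripleProduct

lemma theta_weierstrass {p s x y z w : ℂ} (hp : ‖p‖ < 1) (hx : x ≠ 0) (hy : y ≠ 0) (hz : z ≠ 0)
    (hw : w ≠ 0) (hs : s ^ 2 = x * y * z * w) :
    theta x p * theta y p * (theta z p * theta w p) -
        theta (s / x) p * theta (s / y) p * (theta (s / z) p * theta (s / w) p) =
      -x * (theta s p * theta (z * w / s) p * (theta (y * z / s) p * theta (y * w / s) p)) := by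
  have hs0 : s ≠ 0 := by
    rintro rfl
    simp [hx, hy, hz, hw] at hs
  rcases eq_or_ne p 0 with rfl | hp0
  · simp only [theta_zero_right]
    obtain rfl : w = s ^ 2 / (x * y * z) := by
      field_simp
      linear_combination -hs
    field_simp
    ring
  · have h := thetaSeries_weierstrass (s := -s) hp hp0 (neg_ne_zero.mpr hx) (neg_ne_zero.mpr hy)
      (neg_ne_zero.mpr hz) (neg_ne_zero.mpr hw) (by linear_combination hs)
    simp only [neg_neg, div_neg, neg_mul_neg] at h
    have htriple {a : ℂ} (ha : a ≠ 0) := (jacobi_triple_product hp hp0 ha).symm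
    rw [htriple hx, htriple hy, htriple hz, htriple hw, htriple hs0, htriple (by simp [*]),
      htriple (by simp [*]), htriple (by simp [*]), htriple (by simp [*]), htriple (by simp [*]),
      htriple (by simp [*]), htriple (by simp [*])] at h
    refine mul_left_cancel₀ (pow_ne_zero 4 (qPochhammerInf_self_ne_zero hp)) ?_
    linear_combination h

lemma one_sub_theta_prod_div_theta_prod {p q t t₀ t₁ t₂ t₃ : ℂ} (hp : ‖p‖ < 1) (hq : q ≠ 0)
    (ht : t ≠ 0) (hbal : t₀ * t₁ * t₂ * t₃ = q ^ 2)
    (hd₀ : theta (q * t / t₀) p ≠ 0) (hd₁ : theta (q * t / t₁) p ≠ 0)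
    (hd₂ : theta (q * t / t₂) p ≠ 0) (hd₃ : theta (q * t / t₃) p ≠ 0) :
    1 - theta (t₀ * t) p / theta (q * t / t₀) p * (theta (t₁ * t) p / theta (q * t / t₁) p) *
        (theta (t₂ * t) p / theta (q * t / t₂) p) * (theta (t₃ * t) p / theta (q * t / t₃) p) =
      theta (q * t ^ 2) p * theta (q / (t₁ * t₂)) p * theta (q / (t₁ * t₃)) p *
          theta (q / (t₂ * t₃)) p /
        (theta (q / (t₁ * t₂ * t₃ * t)) p * theta (q * t / t₁) p * theta (q * t / t₂) p *
          theta (q * t / t₃) p) := by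
  have hprod : t₀ * t₁ * t₂ * t₃ ≠ 0 := hbal ▸ pow_ne_zero 2 hq
  simp only [mul_ne_zero_iff] at hprod
  obtain ⟨⟨⟨h₀, h₁⟩, h₂⟩, h₃⟩ := hprod
  have hx : q * t / t₀ ≠ 0 := by simp [*]
  have hinv : theta (q / (t₁ * t₂ * t₃ * t)) p = -theta (q * t / t₀) p / (q * t / t₀) := by
    rw [← theta_inv hp hx]
    congr 1
    field_simp
    linear_combination -hbal
  have h := theta_weierstrass (s := q * t ^ 2) hp hx
    (y := q * t / t₁) (z := q * t / t₂) (w := q * t / t₃)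
    (by simp [*]) (by simp [*]) (by simp [*]) (by field_simp; linear_combination hbal)
  have hcompl {a : ℂ} (ha : a ≠ 0) : q * t ^ 2 / (q * t / a) = a * t := by field_simp
  have hpair {a b : ℂ} (ha : a ≠ 0) (hb : b ≠ 0) :
      q * t / a * (q * t / b) / (q * t ^ 2) = q / (a * b) := by field_simp
  rw [hcompl h₀, hcompl h₁, hcompl h₂, hcompl h₃, hpair h₁ h₂, hpair h₁ h₃, hpair h₂ h₃] at h
  rw [hinv]
  field_simp at h ⊢
  linear_combination h

theorem frenkel_turaev_N1_general {p q t0 t1 t2 t3 t4 t5 : ℂ} (hp : ‖p‖ < 1) (hq0 : q ≠ 0)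
    (hbal : t0 * t1 * t2 * t3 * t4 * t5 = q) (hterm : t4 * t5 = q⁻¹)
    (hd1 : theta (t5 ^ 2) p ≠ 0)
    (hd2 : theta (q * t5 / t0) p ≠ 0) (hd3 : theta (q * t5 / t1) p ≠ 0)
    (hd4 : theta (q * t5 / t2) p ≠ 0) (hd5 : theta (q * t5 / t3) p ≠ 0)
    (hd6 : theta (q * t5 / t4) p ≠ 0) (hd7 : theta (q * t5 / t5) p ≠ 0) :
    1 + theta (t5 ^ 2 * q ^ 2) p / theta (t5 ^ 2) p *
        ((theta (t0 * t5) p / theta (q * t5 / t0) p) *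
         (theta (t1 * t5) p / theta (q * t5 / t1) p) *
         (theta (t2 * t5) p / theta (q * t5 / t2) p) *
         (theta (t3 * t5) p / theta (q * t5 / t3) p) *
         (theta (t4 * t5) p / theta (q * t5 / t4) p) *
         (theta (t5 * t5) p / theta (q * t5 / t5) p)) * q =
      theta (q * t5 ^ 2) p * theta (q / (t1 * t2)) p * theta (q / (t1 * t3)) p *
          theta (q / (t2 * t3)) p /
        (theta (q / (t1 * t2 * t3 * t5)) p * theta (q * t5 / t1) p *
          theta (q * t5 / t2) p * theta (q * t5 / t3) p) := by
  have h4 : t4 ≠ 0 := left_ne_zero_of_mul (hterm ▸ inv_ne_zero hq0)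
  have h5 : t5 ≠ 0 := right_ne_zero_of_mul (hterm ▸ inv_ne_zero hq0)
  have hbal' : t0 * t1 * t2 * t3 = q ^ 2 := by
    rw [mul_assoc _ t4, hterm] at hbal
    field_simp at hbal
    exact hbal
  have harg4 : q * t5 / t4 = t5 ^ 2 * q ^ 2 := by
    field_simp at hterm ⊢
    linear_combination -hterm
  have harg5 : q * t5 / t5 = q := mul_div_cancel_right₀ q h5
  rw [harg4] at hd6
  rw [harg5] at hd7
  rw [harg4, harg5, hterm, theta_inv hp hq0, ← pow_two t5,
    ← one_sub_theta_prod_div_theta_prod hp hq0 h5 hbal' hd2 hd3 hd4 hd5]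
  field_simp
  ring

theorem frenkel_turaev_N1 (p q t0 t1 t2 t3 t4 t5 : ℂ)
    (hp : ‖p‖ < 1) (hq : ‖q‖ < 1) (hq0 : q ≠ 0)
    (h0 : t0 ≠ 0) (h1 : t1 ≠ 0) (h2 : t2 ≠ 0) (h3 : t3 ≠ 0) (h4 : t4 ≠ 0) (h5 : t5 ≠ 0)
    (hbal : t0 * t1 * t2 * t3 * t4 * t5 = q)
    (hterm : t4 * t5 = q⁻¹)
    (hd1 : theta (t5 ^ 2) p ≠ 0)
    (hd2 : theta (q * t5 / t0) p ≠ 0) (hd3 : theta (q * t5 / t1) p ≠ 0)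
    (hd4 : theta (q * t5 / t2) p ≠ 0) (hd5 : theta (q * t5 / t3) p ≠ 0)
    (hd6 : theta (q * t5 / t4) p ≠ 0) (hd7 : theta (q * t5 / t5) p ≠ 0)
    (hd8 : theta (q / (t1 * t2 * t3 * t5)) p ≠ 0) :
    1 + theta (t5 ^ 2 * q ^ 2) p / theta (t5 ^ 2) p *
        ((theta (t0 * t5) p / theta (q * t5 / t0) p) *
         (theta (t1 * t5) p / theta (q * t5 / t1) p) *
         (theta (t2 * t5) p / theta (q * t5 / t2) p) *
         (theta (t3 * t5) p / theta (q * t5 / t3) p) *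
         (theta (t4 * t5) p / theta (q * t5 / t4) p) *
         (theta (t5 * t5) p / theta (q * t5 / t5) p)) * q =
      theta (q * t5 ^ 2) p * theta (q / (t1 * t2)) p * theta (q / (t1 * t3)) p *
          theta (q / (t2 * t3)) p /
        (theta (q / (t1 * t2 * t3 * t5)) p * theta (q * t5 / t1) p *
          theta (q * t5 / t2) p * theta (q * t5 / t3) p) := by
  exact frenkel_turaev_N1_general hp hq0 hbal hterm hd1 hd2 hd3 hd4 hd5 hd6 hd7
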